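/- Let M ∈ 𝔻ℍ[t] be a bounded monic reduced motion polynomial and let M = M₁·M₂⋯M_r be a factorization into monic motion polynomials such that ν(Mᵢ) = Nᵢ^{nᵢ} for pairwise coprime real irreducible quadratic polynomials N₁, …, N_r ∈ ℝ[t] and positive integers n₁, …, n_r. If M admits a factorization into monic linear motion polynomial factors, then each Mᵢ (i = 1, …, r) admits a factorization into monic linear motion polynomial factors. -/

import Mathlib

open Polynomial DualNumber TrivSqZeroExt

noncomputable section

/-- The real quaternions. -/
abbrev Hq : Type := Quaternion ℝ

/-- The dual quaternions. -/
abbrev DHq : Type := DualNumber Hq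

/-- Conjugation of a dual quaternion: `(p + ε d)* = p* + ε d*`. -/
instance : Star DHq := ⟨fun x => inl (star x.fst) + inr (star x.snd)⟩

/-- Coefficient-wise (quaternion) conjugation of a polynomial. -/
def cstar {R : Type*} [Semiring R] [Star R] (A : R[X]) : R[X] :=
  A.sum fun n a => Polynomial.C (star a) * Polynomial.X ^ n

/-- The embedding `ℝ[t] → ℍ[t]`. -/
def qPoly (f : ℝ[X]) : Hq[X] := f.map (algebraMap ℝ Hq)

/-- The embedding `ℍ[t] → 𝔻ℍ[t]` (primal part). -/
def dhQ (P : Hq[X]) : DHq[X] := P.map (inlHom Hq Hq)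

/-- The embedding `ℝ[t] → 𝔻ℍ[t]`. -/
def dPoly (f : ℝ[X]) : DHq[X] := dhQ (qPoly f)

/-- The dual quaternion polynomial `P + ε D` with primal part `P` and dual part `D`. -/
def mp (P D : Hq[X]) : DHq[X] := dhQ P + Polynomial.C ε * dhQ D

/-- The primal part of a dual quaternion polynomial. -/
def primal (A : DHq[X]) : Hq[X] := A.map (fstHom ℝ Hq Hq).toRingHom

/-- A motion polynomial: a dual quaternion polynomial whose norm polynomial
`ν(M) = M·M*` is a nonzero real polynomial. -/
def IsMotion (M : DHq[X]) : Prop := ∃ f : ℝ[X], f ≠ 0 ∧ M * cstar M = dPoly f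

/-- A real polynomial divides a quaternion polynomial. -/
def RDvdQ (f : ℝ[X]) (A : Hq[X]) : Prop := ∃ B : Hq[X], A = qPoly f * B

/-- A real polynomial divides a dual quaternion polynomial. -/
def RDvdD (f : ℝ[X]) (A : DHq[X]) : Prop := ∃ B : DHq[X], A = dPoly f * B

/-- `g` is the greatest common monic real polynomial divisor of a quaternion polynomial `A`
(with itself), i.e. `g = mrpf A`. -/
def IsMrpfQ (g : ℝ[X]) (A : Hq[X]) : Prop :=
  g.Monic ∧ RDvdQ g A ∧ ∀ f : ℝ[X], f.Monic → RDvdQ f A → f ∣ g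

/-- `g` is the greatest common monic real polynomial divisor of `c ∈ ℝ[t]` and a quaternion
polynomial `A`, i.e. `g = mrpf(c, A)`. -/
def IsMrpf2 (g : ℝ[X]) (c : ℝ[X]) (A : Hq[X]) : Prop :=
  g.Monic ∧ g ∣ c ∧ RDvdQ g A ∧
    ∀ f : ℝ[X], f.Monic → f ∣ c → RDvdQ f A → f ∣ g

/-- `g` is the greatest common monic real polynomial divisor of `c ∈ ℝ[t]` and two quaternion
polynomials `A` and `B`, i.e. `g = mrpf(c, A, B)`. -/
def IsMrpf3 (g : ℝ[X]) (c : ℝ[X]) (A B : Hq[X]) : Prop :=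
  g.Monic ∧ g ∣ c ∧ RDvdQ g A ∧ RDvdQ g B ∧
    ∀ f : ℝ[X], f.Monic → f ∣ c → RDvdQ f A → RDvdQ f B → f ∣ g

/-- A quaternion polynomial is reduced: `mrpf = 1`, i.e. it has only constant real
polynomial factors. -/
def ReducedQ (A : Hq[X]) : Prop := ∀ f : ℝ[X], f.Monic → RDvdQ f A → f = 1

/-- A dual quaternion polynomial is reduced: `mrpf = 1`. -/
def ReducedD (A : DHq[X]) : Prop := ∀ f : ℝ[X], f.Monic → RDvdD f A → f = 1

/-- Boundedness of a (monic reduced) motion polynomial: `mrpf` of its primal part has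
no real root, equivalently no linear real polynomial `t - a` divides the primal part. -/
def BoundedD (M : DHq[X]) : Prop :=
  ∀ a : ℝ, ¬ RDvdQ (Polynomial.X - Polynomial.C a) (primal M)

/-- A generic motion polynomial: monic, a motion polynomial, with `mrpf` of the primal
part equal to `1`. -/
def GenericD (M : DHq[X]) : Prop :=
  M.Monic ∧ IsMotion M ∧ ReducedQ (primal M)

/-- The monic linear dual quaternion polynomial `t - p - ε d`. -/
def lin (p d : Hq) : DHq[X] := mp (Polynomial.X - Polynomial.C p) (-Polynomial.C d)

/-- `M` admits a factorization into monic linear motion polynomial factors. -/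
def HasLinFact (M : DHq[X]) : Prop :=
  ∃ L : List DHq, (∀ h ∈ L, IsMotion (Polynomial.X - Polynomial.C h)) ∧
    M = (L.map fun h => Polynomial.X - Polynomial.C h).prod

end
theorem aux_star_add (x y : DHq) : star (x + y) = star x + star y := by
  apply TrivSqZeroExt.ext
  · show ((inl (star (x+y).fst) + inr (star (x+y).snd) : DHq)).fst = ((inl (star x.fst) + inr (star x.snd)) + (inl (star y.fst) + inr (star y.snd)) : DHq).fst
    simp
  · show ((inl (star (x+y).fst) + inr (star (x+y).snd) : DHq)).snd = ((inl (star x.fst) + inr (star x.snd)) + (inl (star y.fst) + inr (star y.snd)) : DHq).snd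
    simp

theorem aux_star_mul (x y : DHq) : star (x * y) = star y * star x := by
  apply TrivSqZeroExt.ext
  · show ((inl (star (x*y).fst) + inr (star (x*y).snd) : DHq)).fst = ((inl (star y.fst) + inr (star y.snd)) * (inl (star x.fst) + inr (star x.snd)) : DHq).fst
    simp
  · show ((inl (star (x*y).fst) + inr (star (x*y).snd) : DHq)).snd = ((inl (star y.fst) + inr (star y.snd)) * (inl (star x.fst) + inr (star x.snd)) : DHq).snd
    simp [add_comm]

theorem aux_star_fst (x : DHq) : (star x).fst = star x.fst := by
  show (inl (star x.fst) + inr (star x.snd) : DHq).fst = _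
  simp

theorem aux_star_snd (x : DHq) : (star x).snd = star x.snd := by
  show (inl (star x.fst) + inr (star x.snd) : DHq).snd = _
  simp

theorem aux_star_star (x : DHq) : star (star x) = x := by
  apply TrivSqZeroExt.ext <;> simp [aux_star_fst, aux_star_snd]

theorem aux_star_zero : star (0 : DHq) = 0 := by
  apply TrivSqZeroExt.ext <;> simp [aux_star_fst, aux_star_snd]

theorem aux_star_one : star (1 : DHq) = 1 := by
  apply TrivSqZeroExt.ext <;> simp [aux_star_fst, aux_star_snd]

theorem aux_star_neg (x : DHq) : star (-x) = -star x := by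
  apply TrivSqZeroExt.ext <;> simp [aux_star_fst, aux_star_snd]

theorem aux_star_sum {ι : Type*} (s : Finset ι) (f : ι → DHq) :
    star (∑ i ∈ s, f i) = ∑ i ∈ s, star (f i) := by
  classical
  induction s using Finset.induction_on with
  | empty => simp [aux_star_zero]
  | insert a s ha ih => rw [Finset.sum_insert ha, Finset.sum_insert ha, aux_star_add, ih]

theorem aux_norm_central (k x : DHq) : (star k * k) * x = x * (star k * k) := by
  apply TrivSqZeroExt.ext
  · ext <;> simp [aux_star_fst, aux_star_snd] <;> ring
  · ext <;> simp [aux_star_fst, aux_star_snd] <;> ring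

theorem cstar_coeff (A : DHq[X]) (n : ℕ) : (cstar A).coeff n = star (A.coeff n) := by
  unfold cstar
  rw [Polynomial.sum_def, Polynomial.finset_sum_coeff]
  simp only [Polynomial.coeff_C_mul, Polynomial.coeff_X_pow]
  rw [Finset.sum_eq_single n]
  · simp
  · intro b _ hb
    simp [hb.symm]
  · intro h
    simp [Polynomial.notMem_support_iff.mp h, aux_star_zero]

theorem cstar_mul (A B : DHq[X]) : cstar (A * B) = cstar B * cstar A := by
  ext1 n
  rw [cstar_coeff, Polynomial.coeff_mul, Polynomial.coeff_mul, aux_star_sum,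
    ← Finset.Nat.sum_antidiagonal_swap]
  refine Finset.sum_congr rfl fun p _ => ?_
  simp [cstar_coeff, aux_star_mul]

theorem cstar_one : cstar (1 : DHq[X]) = 1 := by
  ext1 n
  rw [cstar_coeff, Polynomial.coeff_one]
  split_ifs <;> simp [aux_star_one, aux_star_zero]

theorem cstar_lin (h : DHq) : cstar (X - C h) = X - C (star h) := by
  ext1 n
  rw [cstar_coeff]
  rw [Polynomial.coeff_sub, Polynomial.coeff_sub, Polynomial.coeff_X, Polynomial.coeff_C,
    Polynomial.coeff_C, sub_eq_add_neg, sub_eq_add_neg, aux_star_add, aux_star_neg]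
  split_ifs <;> simp [aux_star_one, aux_star_zero]

theorem cstar_natDegree (A : DHq[X]) : (cstar A).natDegree = A.natDegree := by
  have h : ∀ A : DHq[X], (cstar A).natDegree ≤ A.natDegree := by
    intro A
    rw [Polynomial.natDegree_le_iff_coeff_eq_zero]
    intro n hn
    rw [cstar_coeff, Polynomial.coeff_eq_zero_of_natDegree_lt hn, aux_star_zero]
  have h2 : cstar (cstar A) = A := by
    ext1 n
    rw [cstar_coeff, cstar_coeff, aux_star_star]
  apply le_antisymm (h A)
  conv_lhs => rw [← h2]
  exact h _

theorem cstar_monic {A : DHq[X]} (hA : A.Monic) : (cstar A).Monic := by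
  rw [Polynomial.Monic, Polynomial.leadingCoeff, cstar_natDegree, cstar_coeff,
    hA.coeff_natDegree, aux_star_one]

theorem dPoly_eq (f : ℝ[X]) : dPoly f = f.map (algebraMap ℝ DHq) := by
  unfold dPoly dhQ qPoly
  rw [Polynomial.map_map]
  rfl

theorem dPoly_coeff (f : ℝ[X]) (n : ℕ) : (dPoly f).coeff n = algebraMap ℝ DHq (f.coeff n) := by
  rw [dPoly_eq, Polynomial.coeff_map]

theorem dPoly_mul (f g : ℝ[X]) : dPoly (f * g) = dPoly f * dPoly g := by
  simp [dPoly_eq]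

theorem dPoly_add (f g : ℝ[X]) : dPoly (f + g) = dPoly f + dPoly g := by
  simp [dPoly_eq]

theorem dPoly_one : dPoly 1 = 1 := by
  simp [dPoly_eq]

theorem aux_algMap_inj : Function.Injective (algebraMap ℝ DHq) := 
  FaithfulSMul.algebraMap_injective ℝ DHq

theorem dPoly_inj {f g : ℝ[X]} (h : dPoly f = dPoly g) : f = g := by
  rw [dPoly_eq, dPoly_eq] at h
  exact Polynomial.map_injective _ aux_algMap_inj h

theorem dPoly_comm (f : ℝ[X]) (A : DHq[X]) : dPoly f * A = A * dPoly f := by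
  ext1 n
  rw [Polynomial.coeff_mul, Polynomial.coeff_mul, ← Finset.Nat.sum_antidiagonal_swap]
  refine Finset.sum_congr rfl fun p _ => ?_
  simp only [dPoly_coeff, Prod.fst_swap, Prod.snd_swap]
  exact Algebra.commutes _ _

theorem dPoly_monic {f : ℝ[X]} (h : (dPoly f).Monic) : f.Monic := by
  rw [dPoly_eq] at h
  exact Polynomial.monic_of_injective aux_algMap_inj h

theorem dPoly_natDegree (f : ℝ[X]) : (dPoly f).natDegree = f.natDegree := by
  rw [dPoly_eq]
  exact Polynomial.natDegree_map_eq_of_injective aux_algMap_inj f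

/-- `A` has norm polynomial `a`. -/
def NP (A : DHq[X]) (a : ℝ[X]) : Prop := A * cstar A = dPoly a

theorem NP.mul {A B : DHq[X]} {a b : ℝ[X]} (hA : NP A a) (hB : NP B b) : NP (A * B) (a * b) := by
  unfold NP at *
  rw [cstar_mul, dPoly_mul, mul_assoc, ← mul_assoc B, hB, dPoly_comm, ← mul_assoc, hA]

theorem NP.one : NP 1 1 := by
  unfold NP
  rw [cstar_one, dPoly_one, one_mul]

theorem NP.monic {A : DHq[X]} {a : ℝ[X]} (hA : NP A a) (h : A.Monic) : a.Monic := by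
  apply dPoly_monic
  rw [← hA]
  exact h.mul (cstar_monic h)

theorem NP.natDegree {A : DHq[X]} {a : ℝ[X]} (hA : NP A a) (h : A.Monic) :
    a.natDegree = 2 * A.natDegree := by
  rw [← dPoly_natDegree, ← hA, h.natDegree_mul (cstar_monic h), cstar_natDegree]
  ring

theorem NP.left {A : DHq[X]} {a : ℝ[X]} (hA : NP A a) (h : A.Monic) : cstar A * A = dPoly a := by
  apply h.isRegular.left
  show A * (cstar A * A) = A * dPoly a
  rw [← mul_assoc, hA, dPoly_comm]

theorem NP.unique_norm {A : DHq[X]} {a b : ℝ[X]} (hA : NP A a) (hB : NP A b) : a = b :=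
  dPoly_inj (hA.symm.trans hB)

theorem NP_unique {A B A' B' : DHq[X]} {a b : ℝ[X]} (hA : A.Monic) 
    (hA' : A'.Monic) (nA : NP A a) (nA' : NP A' a) (nB' : NP B' b)
    (hab : IsCoprime a b) (h : A * B = A' * B') : A = A' ∧ B = B' := by
  have key : A = A' := by
    obtain ⟨u, v, huv⟩ := hab
    have h1 : cstar A * A' * dPoly b = dPoly a * (B * cstar B') := by
      rw [← nB', ← nA.left hA]
      calc cstar A * A' * (B' * cstar B') = cstar A * (A' * B') * cstar B' := by
            simp only [mul_assoc]
        _ = _ := by rw [← h]; simp only [mul_assoc]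
    have h2 : cstar A * A' = dPoly a * (cstar A * A' * dPoly u + B * cstar B' * dPoly v) := by
      calc cstar A * A' = cstar A * A' * dPoly (u * a + v * b) := by
            rw [huv, dPoly_one, mul_one]
        _ = dPoly a * (cstar A * A' * dPoly u) + cstar A * A' * dPoly b * dPoly v := by
            rw [dPoly_add, mul_add, dPoly_mul, dPoly_mul, dPoly_comm v, dPoly_comm a]
            simp only [mul_assoc]
        _ = _ := by rw [h1, mul_add]; simp only [mul_assoc]
    generalize cstar A * A' * dPoly u + B * cstar B' * dPoly v = Q at h2
    have ma : (dPoly a).Monic := by rw [← nA]; exact hA.mul (cstar_monic hA)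
    have mQ : Q.Monic := ma.of_mul_monic_left (h2 ▸ (cstar_monic hA).mul hA')
    have hd := congrArg Polynomial.natDegree h2
    rw [(cstar_monic hA).natDegree_mul hA', ma.natDegree_mul mQ, cstar_natDegree,
      dPoly_natDegree] at hd
    have e1 := nA.natDegree hA
    have e2 := nA'.natDegree hA'
    have hQ : Q = 1 := by
      apply mQ.natDegree_eq_zero.mp
      omega
    rw [hQ, mul_one, ← nA.left hA] at h2
    exact ((cstar_monic hA).isRegular.left h2).symm
  subst key
  exact ⟨rfl, hA.isRegular.left h⟩

theorem lin_expand (x y : DHq) :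
    (X - C x) * (X - C y) = X ^ 2 - C (x + y) * X + C (x * y) := by
  rw [sub_mul, mul_sub, mul_sub, Polynomial.X_mul_C, C_add, C_mul]
  noncomm_ring

theorem NP_lin {h : DHq} {f : ℝ[X]} (hf : NP (X - C h) f) :
    h + star h = algebraMap ℝ DHq (- f.coeff 1) ∧ h * star h = algebraMap ℝ DHq (f.coeff 0) := by
  unfold NP at hf
  rw [cstar_lin, lin_expand] at hf
  constructor
  · have := congrArg (fun p => p.coeff 1) hf
    simp [dPoly_coeff, Polynomial.coeff_X_pow, Polynomial.coeff_C, -map_add] at this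
    rw [map_neg, ← this]; abel
  · have := congrArg (fun p => p.coeff 0) hf
    simpa [dPoly_coeff, Polynomial.coeff_X_pow, Polynomial.coeff_C, -map_add, -map_mul] using this

theorem NP_of_lin {h h' : DHq} {f : ℝ[X]} (hf : NP (X - C h) f)
    (e1 : h' + star h' = h + star h) (e2 : h' * star h' = h * star h) : NP (X - C h') f := by
  unfold NP at *
  rw [cstar_lin, lin_expand] at *
  rw [e1, e2, hf]

theorem swap_lin {h1 h2 : DHq} {f g : ℝ[X]} (hf : NP (X - C h1) f) (hg : NP (X - C h2) g)
    (hfg : IsCoprime f g) : ∃ h2' h1' : DHq,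
      (X - C h1) * (X - C h2) = (X - C h2') * (X - C h1') ∧ NP (X - C h2') g ∧
      NP (X - C h1') f := by
  obtain ⟨s1, n1⟩ := NP_lin hf
  obtain ⟨s2, n2⟩ := NP_lin hg
  have hk : IsUnit (star h2 - h1) := by
    rw [TrivSqZeroExt.isUnit_iff_isUnit_fst, isUnit_iff_ne_zero]
    intro h0
    have hp : h1.fst = star h2.fst := by
      rw [fst_sub, aux_star_fst] at h0
      exact (sub_eq_zero.mp h0).symm
    have fa : ∀ r r' : ℝ, (algebraMap ℝ DHq r).fst = (algebraMap ℝ DHq r').fst → r = r' := by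
      intro r r' h
      have h' : algebraMap ℝ Hq r = algebraMap ℝ Hq r' := h
      exact FaithfulSMul.algebraMap_injective ℝ Hq h'
    have t : -f.coeff 1 = -g.coeff 1 := by
      apply fa
      rw [← s1, ← s2]
      simp [aux_star_fst, hp, add_comm]
    have n : f.coeff 0 = g.coeff 0 := by
      apply fa
      rw [← n1, ← n2]
      simp only [fst_mul, aux_star_fst, hp, star_star]
      ext <;> simp <;> ring
    have e : f = g := by
      apply hf.unique_norm
      apply NP_of_lin hg
      · rw [s1, s2, t]
      · rw [n1, n2, n]
    subst e
    have hu : IsUnit f := isCoprime_self.mp hfg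
    have hd := hf.natDegree (monic_X_sub_C h1)
    rw [Polynomial.natDegree_eq_zero_of_isUnit hu, Polynomial.natDegree_X_sub_C] at hd
    omega
  obtain ⟨k, hk⟩ := hk
  have hh1 : h1 = star h2 - k := by rw [hk]; abel
  have cs : ∀ x : DHq, (h2 + star h2) * x = x * (h2 + star h2) := by
    intro x; rw [s2]; exact Algebra.commutes _ _
  have cn : ∀ x : DHq, (h2 * star h2) * x = x * (h2 * star h2) := by
    intro x; rw [n2]; exact Algebra.commutes _ _
  have hc : star h2 * h2 = h2 * star h2 := by
    have := cs h2
    rw [add_mul, mul_add] at this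
    exact add_left_cancel this
  set h2' : DHq := k * h2 * (k⁻¹ : DHqˣ) with h2'def
  have st : star h2' = k * star h2 * (k⁻¹ : DHqˣ) := by
    have e1 : star (k : DHq) * star ((k⁻¹ : DHqˣ) : DHq) = 1 := by
      rw [← aux_star_mul, Units.inv_mul, aux_star_one]
    have e1' : star ((k⁻¹ : DHqˣ) : DHq) * star (k : DHq) = 1 := by
      rw [← aux_star_mul, Units.mul_inv, aux_star_one]
    rw [h2'def, aux_star_mul, aux_star_mul, Units.eq_mul_inv_iff_mul_eq]
    have := aux_norm_central (k : DHq) (star h2)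
    calc star ((k⁻¹ : DHqˣ) : DHq) * (star h2 * star (k : DHq)) * k
        = star ((k⁻¹ : DHqˣ) : DHq) * (star h2 * (star (k : DHq) * k)) := by
          simp only [mul_assoc]
      _ = (star ((k⁻¹ : DHqˣ) : DHq) * star (k : DHq)) * k * star h2 := by
          rw [← this]; simp only [mul_assoc]
      _ = _ := by rw [e1', one_mul]
  have conj : ∀ x y : DHq, (k * x * (k⁻¹ : DHqˣ)) * (k * y * (k⁻¹ : DHqˣ)) = 
      k * (x * y) * (k⁻¹ : DHqˣ) := by
    intro x y
    simp only [mul_assoc, Units.inv_mul_cancel_left]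
  have N2 : NP (X - C h2') g := by
    apply NP_of_lin hg
    · rw [st, h2'def, ← add_mul, ← mul_add, ← cs, mul_assoc, Units.mul_inv, mul_one]
    · rw [st, h2'def, conj, ← cn, mul_assoc, Units.mul_inv, mul_one]
  have E : (X - C h1) * (X - C h2) = (X - C h2') * (X - C (h1 + h2 - h2')) := by
    rw [lin_expand, lin_expand]
    congr 2
    · congr 2; abel
    · have a1 : h1 + h2 = (h2 + star h2) - k := by rw [hh1]; abel
      rw [mul_sub, a1, mul_sub, ← cs]
      have a2 : h2' * h2' = k * (h2 * h2) * (k⁻¹ : DHqˣ) := conj _ _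
      have a3 : h2' * k = k * h2 := by rw [h2'def, mul_assoc, Units.inv_mul, mul_one]
      have a4 : (h2 + star h2) * h2' - h2' * h2' = h2 * star h2 := by
        rw [a2, h2'def, ← mul_assoc, ← mul_assoc, cs, mul_assoc (k : DHq), ← sub_mul, ← mul_sub,
          add_mul, add_sub_cancel_left, hc, ← cn, mul_assoc, Units.mul_inv, mul_one]
      rw [sub_right_comm, a4, a3, hh1, sub_mul, hc]
  refine ⟨h2', _, E, N2, ?_⟩
  have P1 := hf.mul hg
  rw [E] at P1
  unfold NP at P1 ⊢
  apply (monic_X_sub_C h2').isRegular.left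
  apply (cstar_monic (monic_X_sub_C h2')).isRegular.right
  show _ * _ * _ = _ * _ * _
  rw [cstar_mul] at P1
  rw [← dPoly_comm f, mul_assoc (dPoly f), N2, ← dPoly_mul, ← P1]
  simp only [mul_assoc]

/-- Product of the linear factors of a list. -/
noncomputable def linPr (L : List DHq) : DHq[X] := (L.map fun h => X - C h).prod

theorem lp_cons (h : DHq) (L : List DHq) : linPr (h :: L) = (X - C h) * linPr L := by simp [linPr]

theorem lp_nil : linPr [] = 1 := by simp [linPr]

theorem lp_monic (L : List DHq) : (linPr L).Monic := by
  induction L with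
  | nil => rw [lp_nil]; exact monic_one
  | cons h L ih => rw [lp_cons]; exact (monic_X_sub_C h).mul ih

/-- `X - h` has norm polynomial dividing `a`. -/
def Ty (a : ℝ[X]) (h : DHq) : Prop := ∃ f, NP (X - C h) f ∧ f ∣ a

theorem move {a b : ℝ[X]} (hab : IsCoprime a b) (L : List DHq) :
    ∀ h : DHq, Ty b h → (∀ x ∈ L, Ty a x) →
    ∃ L' h', (∀ x ∈ L', Ty a x) ∧ Ty b h' ∧ (X - C h) * linPr L = linPr L' * (X - C h') := by
  induction L with
  | nil =>
    intro h hh _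
    exact ⟨[], h, by simp, hh, by simp [lp_nil]⟩
  | cons y L ih =>
    intro h hh hL
    obtain ⟨g, hg, gb⟩ := hh
    obtain ⟨f, hf, fa⟩ := hL y (by simp)
    have cop : IsCoprime g f := (hab.of_isCoprime_of_dvd_left fa).of_isCoprime_of_dvd_right gb |>.symm
    obtain ⟨y', h', E, ny, nh⟩ := swap_lin hg hf cop
    obtain ⟨L', h'', H1, H2, H3⟩ := ih h' ⟨g, nh, gb⟩ (fun x hx => hL x (by simp [hx]))
    refine ⟨y' :: L', h'', ?_, H2, ?_⟩
    · intro x hx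
      rcases List.mem_cons.mp hx with rfl | hx
      · exact ⟨f, ny, fa⟩
      · exact H1 x hx
    · rw [lp_cons, lp_cons, ← mul_assoc, E, mul_assoc, H3, mul_assoc]

theorem sort_lin {a b : ℝ[X]} (hab : IsCoprime a b) (L : List DHq)
    (hL : ∀ x ∈ L, Ty a x ∨ Ty b x) :
    ∃ L1 L2, (∀ x ∈ L1, Ty a x) ∧ (∀ x ∈ L2, Ty b x) ∧ linPr L = linPr L1 * linPr L2 := by
  induction L with
  | nil => exact ⟨[], [], by simp, by simp, by simp [lp_nil]⟩
  | cons h L ih =>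
    obtain ⟨L1, L2, H1, H2, E⟩ := ih (fun x hx => hL x (by simp [hx]))
    rcases hL h (by simp) with hh | hh
    · refine ⟨h :: L1, L2, ?_, H2, ?_⟩
      · intro x hx
        rcases List.mem_cons.mp hx with rfl | hx
        · exact hh
        · exact H1 x hx
      · rw [lp_cons, lp_cons, E, mul_assoc]
    · obtain ⟨L', h', T1, T2, T3⟩ := move hab L1 h hh H1
      refine ⟨L', h' :: L2, T1, ?_, ?_⟩
      · intro x hx
        rcases List.mem_cons.mp hx with rfl | hx
        · exact T2
        · exact H2 x hx
      · rw [lp_cons, lp_cons, E, ← mul_assoc, T3, mul_assoc]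

theorem lp_norm_coprime {a b : ℝ[X]} (hab : IsCoprime a b) (L : List DHq)
    (hL : ∀ x ∈ L, Ty a x) : ∃ F, NP (linPr L) F ∧ IsCoprime F b := by
  induction L with
  | nil => exact ⟨1, by rw [lp_nil]; exact NP.one, isCoprime_one_left⟩
  | cons h L ih =>
    obtain ⟨F, hF, cF⟩ := ih (fun x hx => hL x (by simp [hx]))
    obtain ⟨f, hf, fa⟩ := hL h (by simp)
    refine ⟨f * F, by rw [lp_cons]; exact hf.mul hF, ?_⟩
    exact (hab.of_isCoprime_of_dvd_left fa).mul_left cF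

theorem lp_norm (L : List DHq) (hL : ∀ h ∈ L, IsMotion (X - C h)) :
    ∃ F, NP (linPr L) F ∧ ∀ h ∈ L, Ty F h := by
  induction L with
  | nil => exact ⟨1, by rw [lp_nil]; exact NP.one, by simp⟩
  | cons h L ih =>
    obtain ⟨F, hF, cF⟩ := ih (fun x hx => hL x (by simp [hx]))
    obtain ⟨f, _, hf⟩ := hL h (by simp)
    refine ⟨f * F, by rw [lp_cons]; exact NP.mul hf hF, ?_⟩
    intro x hx
    rcases List.mem_cons.mp hx with rfl | hx
    · exact ⟨f, hf, dvd_mul_right _ _⟩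
    · obtain ⟨g, hg, gF⟩ := cF x hx
      exact ⟨g, hg, gF.mul_left _⟩

theorem Ty.motion {a : ℝ[X]} {h : DHq} (hh : Ty a h) : IsMotion (X - C h) := by
  obtain ⟨f, hf, _⟩ := hh
  exact ⟨f, (hf.monic (monic_X_sub_C h)).ne_zero, hf⟩

theorem two_factor {A B : DHq[X]} {a b : ℝ[X]} (hA : A.Monic) (hB : B.Monic)
    (nA : NP A a) (nB : NP B b) (hab : IsCoprime a b)
    (hirr : ∀ p : ℝ[X], Irreducible p → p ∣ a * b → p.natDegree = 2)
    (hfact : HasLinFact (A * B)) : HasLinFact A ∧ HasLinFact B := by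
  obtain ⟨L, hL, E⟩ := hfact
  change A * B = linPr L at E
  obtain ⟨F, hF, tF⟩ := lp_norm L hL
  have hFab : F = a * b := by
    rw [← E] at hF
    exact hF.unique_norm (nA.mul nB)
  subst hFab
  have hty : ∀ x ∈ L, Ty a x ∨ Ty b x := by
    intro x hx
    obtain ⟨f, hf, fab⟩ := tF x hx
    have mf := hf.monic (monic_X_sub_C x)
    have df := hf.natDegree (monic_X_sub_C x)
    rw [Polynomial.natDegree_X_sub_C] at df
    have hnu : ¬ IsUnit f := by
      intro hu
      rw [Polynomial.natDegree_eq_zero_of_isUnit hu] at df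
      omega
    obtain ⟨p, hp, q, hq⟩ := WfDvdMonoid.exists_irreducible_factor hnu mf.ne_zero
    have dp := hirr p hp ((Dvd.intro q hq.symm).trans fab)
    have q0 : q ≠ 0 := by
      rintro rfl
      exact mf.ne_zero (by simp [hq])
    have hqu : IsUnit q := by
      rw [hq, Polynomial.natDegree_mul hp.ne_zero q0] at df
      rw [Polynomial.isUnit_iff_degree_eq_zero, Polynomial.degree_eq_natDegree q0]
      have : q.natDegree = 0 := by omega
      simp [this]
    have as : ∀ c, p ∣ c → f ∣ c := by
      intro c hc
      rw [hq]
      exact (hqu.mul_right_dvd).mpr hc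
    rcases hp.prime.dvd_or_dvd ((Dvd.intro q hq.symm).trans fab) with h | h
    · exact Or.inl ⟨f, hf, as a h⟩
    · exact Or.inr ⟨f, hf, as b h⟩
  obtain ⟨L1, L2, H1, H2, E2⟩ := sort_lin hab L hty
  obtain ⟨a', na', ca'⟩ := lp_norm_coprime hab L1 H1
  obtain ⟨b', nb', cb'⟩ := lp_norm_coprime hab.symm L2 H2
  have hprod : a * b = a' * b' := by
    rw [E2] at hF
    exact hF.unique_norm (na'.mul nb')
  have ea : a = a' := by
    apply Polynomial.eq_of_monic_of_associated (nA.monic hA) (na'.monic (lp_monic _))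
    apply associated_of_dvd_dvd
    · exact cb'.symm.dvd_of_dvd_mul_right (hprod ▸ dvd_mul_right a b)
    · exact ca'.dvd_of_dvd_mul_right (hprod ▸ dvd_mul_right a' b')
  subst ea
  have eb : b = b' := mul_left_cancel₀ (nA.monic hA).ne_zero hprod
  subst eb
  obtain ⟨eA, eB⟩ := NP_unique hA (lp_monic L1) nA na' nb' hab (E.trans E2)
  exact ⟨⟨L1, fun h hh => (H1 h hh).motion, eA⟩, ⟨L2, fun h hh => (H2 h hh).motion, eB⟩⟩

theorem ofFn_norm (r : ℕ) (Ms : Fin r → DHq[X]) (a : Fin r → ℝ[X])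
    (h : ∀ i, (Ms i).Monic ∧ NP (Ms i) (a i)) :
    (List.ofFn Ms).prod.Monic ∧ NP (List.ofFn Ms).prod (∏ i, a i) := by
  induction r with
  | zero => simpa using NP.one
  | succ r ih =>
    rw [List.ofFn_succ, List.prod_cons, Fin.prod_univ_succ]
    obtain ⟨h1, h2⟩ := ih (fun i => Ms i.succ) (fun i => a i.succ) (fun i => h i.succ)
    exact ⟨(h 0).1.mul h1, (h 0).2.mul h2⟩

theorem main_aux (r : ℕ) (Ms : Fin r → DHq[X]) (Ns : Fin r → ℝ[X]) (ns : Fin r → ℕ)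
    (hNs : ∀ i, Irreducible (Ns i) ∧ (Ns i).natDegree = 2)
    (hcop : ∀ i j, i ≠ j → IsCoprime (Ns i) (Ns j))
    (hM : ∀ i, (Ms i).Monic ∧ NP (Ms i) (Ns i ^ ns i))
    (hfact : HasLinFact (List.ofFn Ms).prod) : ∀ i, HasLinFact (Ms i) := by
  induction r with
  | zero => exact fun i => i.elim0
  | succ r ih =>
    obtain ⟨h1, h2⟩ := ofFn_norm r (fun i => Ms i.succ) (fun i => Ns i.succ ^ ns i.succ)
      (fun i => hM i.succ)
    rw [List.ofFn_succ, List.prod_cons] at hfact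
    have key := two_factor (hM 0).1 h1 (hM 0).2 h2 ?_ ?_ hfact
    · intro i
      refine Fin.cases key.1 (fun j => ?_) i
      exact ih (fun i => Ms i.succ) (fun i => Ns i.succ) (fun i => ns i.succ)
        (fun i => hNs i.succ) (fun i j hij => hcop _ _ (by simpa using hij))
        (fun i => hM i.succ) key.2 j
    · apply IsCoprime.prod_right
      intro i _
      exact (hcop 0 i.succ (Fin.succ_ne_zero i).symm).pow
    · intro p hp hd
      rw [← Fin.prod_univ_succ (fun i => Ns i ^ ns i)] at hd
      obtain ⟨i, _, hi⟩ := (hp.prime.dvd_finset_prod_iff _).mp hd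
      have := hp.prime.dvd_of_dvd_pow hi
      rw [← (hNs i).2]
      exact Polynomial.natDegree_eq_of_degree_eq
        (Polynomial.degree_eq_degree_of_associated (hp.associated_of_dvd (hNs i).1 this))

/-- If `M` admits a linear factorization, then so does each factor of a primary-norm
decomposition of `M`. -/
theorem primary_factors_admit_factorization
    (M : DHq[X]) (hmonic : M.Monic) (hmotion : IsMotion M)
    (hred : ReducedD M) (hbdd : BoundedD M)
    (r : ℕ) (Ms : Fin r → DHq[X]) (Ns : Fin r → ℝ[X]) (ns : Fin r → ℕ)
    (hprod : M = (List.ofFn Ms).prod)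
    (hMs : ∀ i, (Ms i).Monic ∧ IsMotion (Ms i))
    (hNs : ∀ i, Irreducible (Ns i) ∧ (Ns i).natDegree = 2)
    (hcop : ∀ i j, i ≠ j → IsCoprime (Ns i) (Ns j))
    (hns : ∀ i, 0 < ns i)
    (hnorm : ∀ i, Ms i * cstar (Ms i) = dPoly (Ns i ^ ns i))
    (hfact : HasLinFact M) :
    ∀ i, HasLinFact (Ms i) := by
  subst hprod
  exact main_aux r Ms Ns ns hNs hcop (fun i => ⟨(hMs i).1, hnorm i⟩) hfact
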